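/- Every homeomorphism h : ℕ_τ → ℕ_τ of the Golomb space satisfies: (1) h(1)=1; (2) h(Π)=Π, where Π is the set of prime numbers; (3) Π_{h(x)} = h(Π_x) for every x ∈ ℕ; (4) h(x^ℕ) = h(x)^ℕ for every x ∈ ℕ. -/

import Mathlib

open TopologicalSpace

/-- The arithmetic progression `a + bℕ₀ = {a + b*n : n ≥ 0}` inside the positive integers. -/
def golombBasic (a b : ℕ) : Set ℕ+ := {x : ℕ+ | ∃ n : ℕ, (x : ℕ) = a + b * n}

/-- The Golomb topology on the positive integers, generated by the arithmetic
progressions `a + bℕ₀` with coprime `a, b ∈ ℕ`. -/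
instance golombTopology : TopologicalSpace ℕ+ :=
  generateFrom {S : Set ℕ+ | ∃ a b : ℕ, 0 < a ∧ 0 < b ∧ Nat.Coprime a b ∧ S = golombBasic a b}

/-- The positive integers not divisible by `p` (the set `ℕ \ pℕ`). -/
abbrev Np (p : ℕ) : Type := {x : ℕ+ // ¬ p ∣ (x : ℕ)}

/-- The `p`-adic topology on `ℕ \ pℕ`, generated by the traces of the sets
`x + p^nℕ₀`, `x, n ∈ ℕ`. -/
def padicTop (p : ℕ) : TopologicalSpace (Np p) :=
  generateFrom {S : Set (Np p) | ∃ x n : ℕ, 0 < x ∧ 0 < n ∧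
    S = {y : Np p | ∃ k : ℕ, ((y : ℕ+) : ℕ) = x + p ^ n * k}}

/-- Closure of a set of positive integers in the `p`-adic topology on `ℕ \ pℕ`,
viewed again as a set of positive integers. -/
def padicClosure (p : ℕ) (A : Set ℕ+) : Set ℕ+ :=
  Subtype.val '' (@closure (Np p) (padicTop p) (Subtype.val ⁻¹' A))

/-- `a^ℕ = {a^k : k ∈ ℕ}`, the set of positive powers of `a`. -/
def powSet (a : ℕ) : Set ℕ+ := {y : ℕ+ | ∃ k : ℕ, 0 < k ∧ (y : ℕ) = a ^ k}

/-- The closure of `a^ℕ` in the `p`-adic topology on `ℕ \ pℕ`. -/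
def clPow (p a : ℕ) : Set ℕ+ := padicClosure p (powSet a)

/-- The family `𝒳_p` of closures of the sets `a^ℕ` for `a ∈ ℕ \ pℕ`, `a ≠ 1`. -/
def XX (p : ℕ) : Set (Set ℕ+) := {X | ∃ a : ℕ, 0 < a ∧ a ≠ 1 ∧ ¬ p ∣ a ∧ X = clPow p a}

/-- The projection `π_n(X)` of a set of positive integers to `ℤ/p^nℤ`. -/
def pin (p n : ℕ) (X : Set ℕ+) : Set (ZMod (p ^ n)) :=
  (fun y : ℕ+ => ((y : ℕ) : ZMod (p ^ n))) '' X

/-- `n(X)`: the least `n ∈ ℕ` with `X = ℕ ∩ π_n⁻¹(π_n(X))` and `|π_n(X)| ≥ max(p,3)`. -/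
noncomputable def nX (p : ℕ) (X : Set ℕ+) : ℕ :=
  sInf {n : ℕ | 0 < n ∧ X = {y : ℕ+ | ((y : ℕ) : ZMod (p ^ n)) ∈ pin p n X} ∧
    max p 3 ≤ (pin p n X).ncard}

/-- `i(X)`: the index of the subgroup `π_{n(X)}(X)` in the group of units of `ℤ/p^{n(X)}ℤ`. -/
noncomputable def iX (p : ℕ) (X : Set ℕ+) : ℕ :=
  Nat.card ((ZMod (p ^ nX p X))ˣ) / (pin p (nX p X) X).ncard

/-!
The Golomb space is rigid: its only homeomorphism is the identity.

Closures of neighbourhoods detect coprimality of positive integers, so `h` fixes `1` and induces a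
permutation `σ` of the primes such that `p ∣ z` exactly when `σ p ∣ h z`. The traces on `ℕ \ pℕ` of
disjoint open sets covering it are `p`-adically open; hence `h` is continuous from the `p`-adic
topology on `ℕ \ pℕ` to the `σ p`-adic topology on `ℕ \ (σ p)ℕ`.

Let `h (q ^ n) = σ q ^ e n` for a prime `q`. For primes `p₁ ≠ p₂` other than `q`, the exponents `a`
and `b` for which some power of `q` is `p₁`-adically close to `q ^ a` and `p₂`-adically close to
`q ^ b` are those congruent modulo a positive integer, namely the stable value of the greatest
common divisors of the orders of `q` modulo `p₁ ^ k` and `p₂ ^ k`. By a weak form of Zsigmondy's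
theorem every prime power other than `2` arises in this way. Therefore `e` preserves the
congruences modulo all these prime powers, which forces `e n = n`.

Comparing the orders of `q` modulo powers of `p` with those of `σ q` modulo powers of `σ p` gives
`σ p = p`. So `h` fixes every prime, and the primes are dense by Dirichlet's theorem.
-/

section GolombTopology

open scoped Topology

lemma self_mem_golombBasic (x : ℕ+) (b : ℕ) : x ∈ golombBasic x b := ⟨0, rfl⟩

lemma golombBasic_subset_of_mem {x : ℕ+} {a b : ℕ} (hx : x ∈ golombBasic a b) :
    golombBasic x b ⊆ golombBasic a b := by
  obtain ⟨m, hm⟩ := hx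
  rintro y ⟨n, hn⟩
  exact ⟨m + n, by rw [hn, hm]; ring⟩

lemma golombBasic_subset_of_dvd (a : ℕ) {b c : ℕ} (hbc : b ∣ c) :
    golombBasic a c ⊆ golombBasic a b := by
  obtain ⟨d, rfl⟩ := hbc
  rintro y ⟨n, hn⟩
  exact ⟨d * n, by rw [hn]; ring⟩

lemma modEq_of_mem_golombBasic {x : ℕ+} {a b : ℕ} (hx : x ∈ golombBasic a b) :
    x ≡ a [MOD b] := by
  obtain ⟨n, hn⟩ := hx
  rw [hn]
  exact Nat.add_mul_mod_self_left a b n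

lemma isOpen_golombBasic {a b : ℕ} (ha : 0 < a) (hb : 0 < b) (hab : a.Coprime b) :
    IsOpen (golombBasic a b) :=
  isOpen_generateFrom_of_mem ⟨a, b, ha, hb, hab, rfl⟩

lemma exists_golombBasic_subset {U : Set ℕ+} (hU : IsOpen U) {x : ℕ+} (hx : x ∈ U) :
    ∃ b, (0 < b ∧ (x : ℕ).Coprime b) ∧ golombBasic x b ⊆ U := by
  induction hU with
  | basic S hS =>
    obtain ⟨a, b, -, hb, hab, rfl⟩ := hS
    have hxb : (x : ℕ).Coprime b := (modEq_of_mem_golombBasic hx).gcd_eq.trans hab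
    exact ⟨b, ⟨hb, hxb⟩, golombBasic_subset_of_mem hx⟩
  | univ => exact ⟨1, ⟨one_pos, Nat.coprime_one_right _⟩, Set.subset_univ _⟩
  | inter S T _ _ ihS ihT =>
    obtain ⟨b, ⟨hb, hxb⟩, hbS⟩ := ihS hx.1
    obtain ⟨c, ⟨hc, hxc⟩, hcT⟩ := ihT hx.2
    exact ⟨b * c, ⟨Nat.mul_pos hb hc, hxb.mul_right hxc⟩, Set.subset_inter
      ((golombBasic_subset_of_dvd x (dvd_mul_right b c)).trans hbS)
      ((golombBasic_subset_of_dvd x (dvd_mul_left c b)).trans hcT)⟩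
  | sUnion 𝒮 _ ih =>
    obtain ⟨S, hS, hxS⟩ := hx
    obtain ⟨b, hb, hbS⟩ := ih S hS hxS
    exact ⟨b, hb, hbS.trans (Set.subset_sUnion_of_mem hS)⟩

lemma nhds_hasBasis_golombBasic (x : ℕ+) :
    (𝓝 x).HasBasis (fun b : ℕ => 0 < b ∧ (x : ℕ).Coprime b) (fun b => golombBasic x b) := by
  refine ⟨fun U => ⟨fun hU => ?_, ?_⟩⟩
  · obtain ⟨V, hVU, hV, hxV⟩ := mem_nhds_iff.1 hU
    obtain ⟨b, hb, hbV⟩ := exists_golombBasic_subset hV hxV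
    exact ⟨b, hb, hbV.trans hVU⟩
  · rintro ⟨b, ⟨hb, hxb⟩, hbU⟩
    exact Filter.mem_of_superset
      ((isOpen_golombBasic x.pos hb hxb).mem_nhds (self_mem_golombBasic x b)) hbU

lemma isOpen_of_forall_modEq {U : Set ℕ+} {b : ℕ} (hb : 0 < b)
    (hcop : ∀ x ∈ U, (x : ℕ).Coprime b) (hmod : ∀ x ∈ U, ∀ y : ℕ+, y ≡ x [MOD b] → y ∈ U) :
    IsOpen U :=
  isOpen_iff_mem_nhds.2 fun x hx => (nhds_hasBasis_golombBasic x).mem_iff.2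
    ⟨b, ⟨hb, hcop x hx⟩, fun y hy => hmod x hx y (modEq_of_mem_golombBasic hy)⟩

lemma exists_add_mul_eq_add_mul {x y b c : ℕ} (hb : 0 < b) (hc : 0 < c)
    (hxy : x ≡ y [MOD b.gcd c]) : ∃ m n, x + b * m = y + c * n := by
  obtain ⟨k, hkx, hky⟩ := Nat.chineseRemainder' hxy
  have hle : x + y ≤ b * c * (x + y) := Nat.le_mul_of_pos_left _ (Nat.mul_pos hb hc)
  have hKx : k + b * c * (x + y) ≡ x [MOD b] := by
    rw [mul_assoc]
    exact (Nat.add_mul_mod_self_left _ _ _).trans hkx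
  have hKy : k + b * c * (x + y) ≡ y [MOD c] := by
    rw [mul_comm b c, mul_assoc]
    exact (Nat.add_mul_mod_self_left _ _ _).trans hky
  obtain ⟨m, hm⟩ := (Nat.modEq_iff_dvd' (by lia)).1 hKx.symm
  obtain ⟨n, hn⟩ := (Nat.modEq_iff_dvd' (by lia)).1 hKy.symm
  exact ⟨m, n, by lia⟩

lemma mem_closure_golombBasic_iff {w : ℕ+} {a b : ℕ} (hb : 0 < b) :
    w ∈ closure (golombBasic a b) ↔ ∀ d, d ∣ b → (w : ℕ).Coprime d → w ≡ a [MOD d] := by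
  rw [mem_closure_iff_nhds_basis (nhds_hasBasis_golombBasic w)]
  constructor
  · intro hw d hdb hwd
    obtain ⟨z, hza, hzw⟩ := hw d ⟨Nat.pos_of_dvd_of_pos hdb hb, hwd⟩
    exact (modEq_of_mem_golombBasic hzw).symm.trans ((modEq_of_mem_golombBasic hza).of_dvd hdb)
  · rintro hw c ⟨hc, hwc⟩
    have hwa := hw (c.gcd b) (Nat.gcd_dvd_right c b) (hwc.coprime_dvd_right (Nat.gcd_dvd_left c b))
    obtain ⟨m, n, hmn⟩ := exists_add_mul_eq_add_mul hc hb hwa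
    exact ⟨⟨w + c * m, Nat.add_pos_left w.pos _⟩, ⟨n, hmn⟩, ⟨m, rfl⟩⟩

/- The point is divisible by the whole prime-to-`p` part of `m`, so only the `p`-parts of the moduli
constrain it. -/
lemma exists_modEq_forall_mem_closure {p m : ℕ} (hp : p.Prime) (hm : 0 < m) (t n : ℕ) :
    ∃ w : ℕ+, w ≡ t [MOD p ^ n] ∧
      ∀ a b : ℕ, b ∣ m → t ≡ a [MOD ordProj[p] b] → w ∈ closure (golombBasic a b) := by
  have hm' : 0 < ordCompl[p] m := Nat.ordCompl_pos p hm.ne'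
  have hcop : (p ^ n * ordProj[p] m).Coprime (ordCompl[p] m) := by
    rw [← pow_add]
    exact (Nat.coprime_ordCompl hp hm.ne').pow_left _
  obtain ⟨k, l, hkl⟩ := exists_add_mul_eq_add_mul (x := t) (y := ordCompl[p] m)
    (Nat.mul_pos (pow_pos hp.pos n) (Nat.ordProj_pos m p)) hm'
    (by rw [hcop.gcd_eq_one]; exact Nat.modEq_one)
  obtain ⟨w, hw⟩ : ∃ w : ℕ+, (w : ℕ) = t + p ^ n * ordProj[p] m * k := ⟨⟨_, by lia⟩, rfl⟩
  have hwt : w ≡ t [MOD p ^ n * ordProj[p] m] := by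
    rw [hw]
    exact Nat.add_mul_mod_self_left _ _ _
  have hwm : ordCompl[p] m ∣ w := ⟨1 + l, by rw [hw, hkl]; ring⟩
  refine ⟨w, hwt.of_dvd (dvd_mul_right _ _), fun a b hbm hta => ?_⟩
  have hb : b ≠ 0 := ne_zero_of_dvd_ne_zero hm.ne' hbm
  rw [mem_closure_golombBasic_iff (Nat.pos_of_ne_zero hb)]
  intro d hdb hwd
  have hd : d ∣ ordProj[p] b := by
    have hdcop : d.Coprime (ordCompl[p] b) :=
      (hwd.coprime_dvd_left ((Nat.ordCompl_dvd_ordCompl_of_dvd hbm p).trans hwm)).symm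
    exact hdcop.dvd_of_dvd_mul_right (by rwa [Nat.ordProj_mul_ordCompl_eq_self])
  have hdm : d ∣ p ^ n * ordProj[p] m :=
    (hd.trans (Nat.ordProj_dvd_ordProj_of_dvd hm.ne' hbm p)).mul_left _
  exact (hwt.of_dvd hdm).trans (hta.of_dvd hd)

instance golombT2Space : T2Space ℕ+ := by
  refine ⟨fun x y hxy => ?_⟩
  obtain ⟨p, hle, hp⟩ := Nat.exists_infinite_primes ((x : ℕ) + y + 1)
  have hxp : (x : ℕ).Coprime p := (Nat.coprime_of_lt_prime x.ne_zero (by lia) hp).symm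
  have hyp : (y : ℕ).Coprime p := (Nat.coprime_of_lt_prime y.ne_zero (by lia) hp).symm
  refine ⟨golombBasic x p, golombBasic y p, isOpen_golombBasic x.pos hp.pos hxp,
    isOpen_golombBasic y.pos hp.pos hyp, self_mem_golombBasic x p, self_mem_golombBasic y p,
    Set.disjoint_left.2 fun z hzx hzy => hxy (PNat.eq ?_)⟩
  have hmod : x ≡ y [MOD p] :=
    (modEq_of_mem_golombBasic hzx).symm.trans (modEq_of_mem_golombBasic hzy)
  exact hmod.eq_of_lt_of_lt (by lia) (by lia)

lemma dense_setOf_prime : Dense {p : ℕ+ | (p : ℕ).Prime} := by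
  intro x
  rw [mem_closure_iff_nhds_basis (nhds_hasBasis_golombBasic x)]
  rintro b ⟨hb, hxb⟩
  obtain ⟨p, hpx, hp, hmod⟩ := Nat.forall_exists_prime_gt_and_modEq x hb.ne' hxb
  obtain ⟨n, hn⟩ := (Nat.modEq_iff_dvd' hpx.le).1 hmod.symm
  exact ⟨⟨p, hp.pos⟩, hp, n, by rw [PNat.mk_coe]; lia⟩

end GolombTopology

section Coprimality

open scoped Topology

/-- Every nonempty open set `V` admits neighbourhoods of `x`, `y`, `z` whose closures meet only
inside the closure of `V`. In the Golomb space this detects coprimality. -/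
def IsClosureTriad {X : Type*} [TopologicalSpace X] (x y z : X) : Prop :=
  ∀ V : Set X, IsOpen V → V.Nonempty → ∃ A ∈ 𝓝 x, ∃ B ∈ 𝓝 y, ∃ C ∈ 𝓝 z,
    closure A ∩ closure B ∩ closure C ⊆ closure V

lemma IsClosureTriad.map {X Y : Type*} [TopologicalSpace X] [TopologicalSpace Y] (h : X ≃ₜ Y)
    {x y z : X} (hxyz : IsClosureTriad x y z) : IsClosureTriad (h x) (h y) (h z) := by
  intro V hV hne
  obtain ⟨A, hA, B, hB, C, hC, hsub⟩ :=
    hxyz (h ⁻¹' V) (hV.preimage h.continuous) (hne.preimage h.surjective)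
  refine ⟨h '' A, h.isOpenMap.image_mem_nhds hA, h '' B, h.isOpenMap.image_mem_nhds hB,
    h '' C, h.isOpenMap.image_mem_nhds hC, ?_⟩
  rwa [← h.image_closure, ← h.image_closure, ← h.image_closure, ← Set.image_inter h.injective,
    ← Set.image_inter h.injective, Set.image_subset_iff, h.preimage_closure]

lemma ordProj_eq_one_of_coprime {p x b : ℕ} (hp : p.Prime) (hpx : p ∣ x) (hxb : x.Coprime b) :
    ordProj[p] b = 1 := by
  have hpb : ¬ p ∣ b := hp.coprime_iff_not_dvd.1 (hxb.coprime_dvd_left hpx)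
  rw [Nat.factorization_eq_zero_of_not_dvd hpb, pow_zero]

lemma notMem_closure_golombBasic_add_prime {p t : ℕ} {w : ℕ+} (hp : p.Prime) (hpt : ¬ p ∣ t)
    (hwt : w ≡ t [MOD p ^ 2]) : w ∉ closure (golombBasic (t + p) (p ^ 2)) := fun hw => by
  have hwp : (w : ℕ).Coprime (p ^ 2) :=
    hwt.gcd_eq.trans ((hp.coprime_iff_not_dvd.2 hpt).pow_left 2).symm
  have hmod : t ≡ t + p [MOD p ^ 2] :=
    hwt.symm.trans ((mem_closure_golombBasic_iff (pow_pos hp.pos 2)).1 hw _ dvd_rfl hwp)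
  have hdvd : p ^ 2 ∣ p := by simpa using (Nat.modEq_iff_dvd' (Nat.le_add_right t p)).1 hmod
  exact hp.prime.not_isUnit (hp.prime.squarefree p (sq p ▸ hdvd))

/- At a common prime `p` of `x` and `y` the closures of their neighbourhoods are unconstrained, so
`z` alone cannot force the points of all three closures into a prescribed class modulo `p ^ 2`. -/
lemma IsClosureTriad.coprime {x y z : ℕ+} (hxyz : IsClosureTriad x y z) :
    (x : ℕ).Coprime y := by
  by_contra hxy
  obtain ⟨p, hp, hpx, hpy⟩ := Nat.Prime.not_coprime_iff_dvd.1 hxy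
  obtain ⟨t, hpt, htz⟩ : ∃ t : ℕ, ¬ p ∣ t ∧ (p ∣ (z : ℕ) ∨ t = z) := by
    by_cases hpz : p ∣ (z : ℕ)
    · exact ⟨1, hp.not_dvd_one, Or.inl hpz⟩
    · exact ⟨z, hpz, Or.inr rfl⟩
  have hp2 : 0 < p ^ 2 := pow_pos hp.pos 2
  have hcop : (t + p).Coprime (p ^ 2) :=
    ((hp.coprime_iff_not_dvd.2 (by simpa using hpt)).pow_left 2).symm
  have hpos : 0 < t + p := Nat.add_pos_right t hp.pos
  obtain ⟨A, hA, B, hB, C, hC, hsub⟩ := hxyz _ (isOpen_golombBasic hpos hp2 hcop)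
    ⟨⟨t + p, hpos⟩, self_mem_golombBasic _ _⟩
  obtain ⟨a, ⟨ha, hxa⟩, haA⟩ := (nhds_hasBasis_golombBasic x).mem_iff.1 hA
  obtain ⟨b, ⟨hb, hyb⟩, hbB⟩ := (nhds_hasBasis_golombBasic y).mem_iff.1 hB
  obtain ⟨c, ⟨hc, hzc⟩, hcC⟩ := (nhds_hasBasis_golombBasic z).mem_iff.1 hC
  obtain ⟨w, hwt, hw⟩ := exists_modEq_forall_mem_closure hp
    (Nat.mul_pos (Nat.mul_pos ha hb) hc) t 2
  have free : ∀ {u d : ℕ}, p ∣ u → u.Coprime d → t ≡ u [MOD ordProj[p] d] := fun hu hud => by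
    rw [ordProj_eq_one_of_coprime hp hu hud]
    exact Nat.modEq_one
  have hwA : w ∈ closure A := closure_mono haA (hw _ _ ⟨b * c, by ring⟩ (free hpx hxa))
  have hwB : w ∈ closure B := closure_mono hbB (hw _ _ ⟨a * c, by ring⟩ (free hpy hyb))
  have hwC : w ∈ closure C := by
    refine closure_mono hcC (hw _ _ (dvd_mul_left c (a * b)) ?_)
    rcases htz with hpz | rfl
    · exact free hpz hzc
    · rfl
  exact notMem_closure_golombBasic_add_prime hp hpt hwt (hsub ⟨⟨hwA, hwB⟩, hwC⟩)

lemma exists_mem_nhds_forall_mem_closure_modEq (x : ℕ+) (b N : ℕ) :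
    ∃ A ∈ 𝓝 x, ∀ w ∈ closure A, ∀ p ∈ b.primeFactors, ¬ p ∣ (x : ℕ) → ¬ p ∣ (w : ℕ) →
      w ≡ x [MOD p ^ N] := by
  set c := ∏ p ∈ b.primeFactors with ¬ p ∣ (x : ℕ), p ^ N
  have hfactor : ∀ p ∈ b.primeFactors.filter (¬ · ∣ (x : ℕ)), p.Prime ∧ ¬ p ∣ (x : ℕ) :=
    fun p hp => (Finset.mem_filter.1 hp).imp_left Nat.prime_of_mem_primeFactors
  have hc : 0 < c := Finset.prod_pos fun p hp => pow_pos (hfactor p hp).1.pos N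
  have hxc : (x : ℕ).Coprime c := Nat.Coprime.prod_right fun p hp =>
    (((hfactor p hp).1.coprime_iff_not_dvd.2 (hfactor p hp).2).pow_left N).symm
  refine ⟨_, (nhds_hasBasis_golombBasic x).mem_of_mem ⟨hc, hxc⟩, fun w hw p hpb hpx hpw => ?_⟩
  refine (mem_closure_golombBasic_iff hc).1 hw _
    (Finset.dvd_prod_of_mem _ (Finset.mem_filter.2 ⟨hpb, hpx⟩)) ?_
  exact (((Nat.prime_of_mem_primeFactors hpb).coprime_iff_not_dvd.2 hpw).pow_left N).symm

lemma mem_closure_golombBasic_of_forall_prime_dvd {a b : ℕ} {w : ℕ+} (hb : 0 < b)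
    (hw : ∀ p ∈ b.primeFactors, p ∣ (w : ℕ)) : w ∈ closure (golombBasic a b) := by
  refine (mem_closure_golombBasic_iff hb).2 fun d hdb hwd => ?_
  have hd : d = 1 := Nat.eq_one_iff_not_exists_prime_dvd.2 fun p hp hpd =>
    Nat.not_coprime_of_dvd_of_dvd hp.one_lt
      (hw p (Nat.mem_primeFactors.2 ⟨hp, hpd.trans hdb, hb.ne'⟩)) hpd hwd
  rw [hd]
  exact Nat.modEq_one

lemma isClosureTriad_of_coprime {x y z : ℕ+} (hxy : x ≠ y) (hxz : x ≠ z) (hyz : y ≠ z)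
    (cxy : (x : ℕ).Coprime y) (cxz : (x : ℕ).Coprime z) (cyz : (y : ℕ).Coprime z) :
    IsClosureTriad x y z := by
  rintro V hV ⟨a, ha⟩
  obtain ⟨b, ⟨hb, -⟩, hbV⟩ := exists_golombBasic_subset hV ha
  set N : ℕ := x + y + z
  obtain ⟨A, hA, hAmod⟩ := exists_mem_nhds_forall_mem_closure_modEq x b N
  obtain ⟨B, hB, hBmod⟩ := exists_mem_nhds_forall_mem_closure_modEq y b N
  obtain ⟨C, hC, hCmod⟩ := exists_mem_nhds_forall_mem_closure_modEq z b N
  refine ⟨A, hA, B, hB, C, hC, ?_⟩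
  rintro w ⟨⟨hwA, hwB⟩, hwC⟩
  have hdvd : ∀ p ∈ b.primeFactors, p ∣ (w : ℕ) := by
    intro p hpb
    by_contra hpw
    have hp := Nat.prime_of_mem_primeFactors hpb
    have hlt : N < p ^ N := Nat.lt_pow_self hp.one_lt
    have separated : ∀ {u v : ℕ+}, w ≡ u [MOD p ^ N] → w ≡ v [MOD p ^ N] → (u : ℕ) ≤ N →
        (v : ℕ) ≤ N → u = v := fun hu hv huN hvN =>
      PNat.eq ((hu.symm.trans hv).eq_of_lt_of_lt (huN.trans_lt hlt) (hvN.trans_lt hlt))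
    have not_dvd : ∀ {u v : ℕ}, u.Coprime v → p ∣ u → ¬ p ∣ v := fun huv hu =>
      hp.coprime_iff_not_dvd.1 (huv.coprime_dvd_left hu)
    by_cases hpx : p ∣ (x : ℕ)
    · exact hyz (separated (hBmod w hwB p hpb (not_dvd cxy hpx) hpw)
        (hCmod w hwC p hpb (not_dvd cxz hpx) hpw) (by lia) (by lia))
    by_cases hpy : p ∣ (y : ℕ)
    · exact hxz (separated (hAmod w hwA p hpb hpx hpw)
        (hCmod w hwC p hpb (not_dvd cyz hpy) hpw) (by lia) (by lia))
    · exact hxy (separated (hAmod w hwA p hpb hpx hpw) (hBmod w hwB p hpb hpy hpw)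
        (by lia) (by lia))
  exact closure_mono hbV (mem_closure_golombBasic_of_forall_prime_dvd hb hdvd)

lemma coprime_iff_exists_isClosureTriad {x y : ℕ+} (hxy : x ≠ y) :
    (x : ℕ).Coprime y ↔ ∃ z, IsClosureTriad x y z := by
  refine ⟨fun cxy => ?_, fun ⟨z, hz⟩ => hz.coprime⟩
  obtain ⟨p, hle, hp⟩ := Nat.exists_infinite_primes ((x : ℕ) + y + 1)
  have hne : ∀ u : ℕ+, (u : ℕ) < p → u ≠ ⟨p, hp.pos⟩ := fun u hu hup =>
    hu.ne (congrArg PNat.val hup)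
  have hcop : ∀ u : ℕ+, (u : ℕ) < p → (u : ℕ).Coprime p := fun u hu =>
    (Nat.coprime_of_lt_prime u.ne_zero hu hp).symm
  exact ⟨⟨p, hp.pos⟩, isClosureTriad_of_coprime hxy (hne x (by lia)) (hne y (by lia)) cxy
    (hcop x (by lia)) (hcop y (by lia))⟩

lemma coprime_map_of_ne (h : ℕ+ ≃ₜ ℕ+) {x y : ℕ+} (hxy : x ≠ y) (cxy : (x : ℕ).Coprime y) :
    (h x : ℕ).Coprime (h y) := by
  obtain ⟨z, hz⟩ := (coprime_iff_exists_isClosureTriad hxy).1 cxy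
  exact (hz.map h).coprime

lemma homeomorph_map_one (h : ℕ+ ≃ₜ ℕ+) : h 1 = 1 := by
  by_contra hne
  obtain ⟨y, hy⟩ := h.surjective (h 1 ^ 2)
  have hy1 : 1 ≠ y := by
    rintro rfl
    exact hne (mul_eq_left.1 ((sq (h 1)).symm.trans hy.symm))
  have hcop := coprime_map_of_ne h hy1 (Nat.coprime_one_left _)
  rw [hy, PNat.pow_coe, Nat.coprime_pow_right_iff two_pos, Nat.coprime_self] at hcop
  exact hne (PNat.coe_eq_one_iff.1 hcop)

lemma coprime_map (h : ℕ+ ≃ₜ ℕ+) {x y : ℕ+} (cxy : (x : ℕ).Coprime y) :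
    (h x : ℕ).Coprime (h y) := by
  rcases eq_or_ne x y with rfl | hxy
  · have hx : x = 1 := PNat.coe_eq_one_iff.1 ((Nat.coprime_self _).1 cxy)
    rw [hx, homeomorph_map_one]
    exact Nat.coprime_one_left 1
  · exact coprime_map_of_ne h hxy cxy

end Coprimality

section PrimePermutation

/-- The permutation `σ` of the primes is the one induced by `h`: divisibility of `z` by `p`
corresponds to divisibility of `h z` by `σ p`. -/
def InducesOnPrimes (h : ℕ+ ≃ₜ ℕ+) (σ : Equiv.Perm Nat.Primes) : Prop :=
  ∀ (p : Nat.Primes) (z : ℕ+), (p : ℕ) ∣ z ↔ (σ p : ℕ) ∣ h z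

lemma InducesOnPrimes.symm {h : ℕ+ ≃ₜ ℕ+} {σ : Equiv.Perm Nat.Primes}
    (hσ : InducesOnPrimes h σ) : InducesOnPrimes h.symm σ.symm := fun p z => by
  simpa only [Equiv.apply_symm_apply, Homeomorph.apply_symm_apply]
    using (hσ (σ.symm p) (h.symm z)).symm

lemma exists_prime_forall_dvd_map_iff (h : ℕ+ ≃ₜ ℕ+) (p : Nat.Primes) :
    ∃ q : Nat.Primes, ∀ z : ℕ+, (p : ℕ) ∣ z ↔ (q : ℕ) ∣ h z := by
  have map_ne_one : (h p : ℕ) ≠ 1 := fun hp => by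
    have hp1 : (p : ℕ+) = 1 := by
      rw [← h.injective.eq_iff, homeomorph_map_one, PNat.coe_eq_one_iff.1 hp]
    exact p.prop.ne_one (congrArg PNat.val hp1)
  obtain ⟨q, hqp⟩ : ∃ q : Nat.Primes, (q : ℕ) ∣ h p :=
    let ⟨q, hq, hqp⟩ := Nat.exists_prime_and_dvd map_ne_one
    ⟨⟨q, hq⟩, hqp⟩
  have dvd_of_dvd_map : ∀ z : ℕ+, (q : ℕ) ∣ h z → (p : ℕ) ∣ z := fun z hqz => by
    by_contra hpz
    exact Nat.not_coprime_of_dvd_of_dvd q.prop.one_lt hqp hqz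
      (coprime_map h (x := p) (p.prop.coprime_iff_not_dvd.2 hpz))
  have hpq : (p : ℕ) ∣ h.symm q :=
    dvd_of_dvd_map _ (by rw [h.apply_symm_apply, Nat.Primes.coe_pnat_nat])
  refine ⟨q, fun z => ⟨fun hpz => ?_, dvd_of_dvd_map z⟩⟩
  by_contra hqz
  have hcop := coprime_map h.symm (x := q) (q.prop.coprime_iff_not_dvd.2 hqz)
  rw [h.symm_apply_apply] at hcop
  exact Nat.not_coprime_of_dvd_of_dvd p.prop.one_lt hpq hpz hcop

lemma eq_of_forall_dvd_iff {p q : Nat.Primes} (hpq : ∀ z : ℕ+, (p : ℕ) ∣ z ↔ (q : ℕ) ∣ z) :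
    p = q :=
  Subtype.ext ((Nat.prime_dvd_prime_iff_eq p.prop q.prop).1 ((hpq q).2 dvd_rfl))

lemma exists_inducesOnPrimes (h : ℕ+ ≃ₜ ℕ+) : ∃ σ, InducesOnPrimes h σ := by
  choose σ hσ using exists_prime_forall_dvd_map_iff h
  choose τ hτ using exists_prime_forall_dvd_map_iff h.symm
  refine ⟨⟨σ, τ, fun p => eq_of_forall_dvd_iff fun z => ?_,
    fun p => eq_of_forall_dvd_iff fun z => ?_⟩, hσ⟩
  · simpa only [h.symm_apply_apply] using ((hσ p z).trans (hτ _ (h z))).symm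
  · simpa only [h.apply_symm_apply] using ((hτ p z).trans (hσ _ (h.symm z))).symm

end PrimePermutation

section PadicContinuity

lemma not_dvd_of_modEq_pow {p x y n : ℕ} (hn : n ≠ 0) (hxy : x ≡ y [MOD p ^ n])
    (hy : ¬ p ∣ y) : ¬ p ∣ x := fun hx =>
  hy (((hxy.of_dvd (dvd_pow_self p hn)).dvd_iff dvd_rfl).1 hx)

/- The closures of two open sets always meet at a point which is only constrained `p`-adically, so
if `C` and `D` separate the integers prime to `p`, then they do so `p`-adically. -/
lemma exists_forall_modEq_pow_mem {p : ℕ} (hp : p.Prime) {C D : Set ℕ+} (hC : IsOpen C)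
    (hD : IsOpen D) (hCD : Disjoint C D) (hcov : ∀ z : ℕ+, ¬ p ∣ (z : ℕ) → z ∈ C ∪ D)
    {x : ℕ+} (hx : x ∈ C) (hpx : ¬ p ∣ (x : ℕ)) :
    ∃ m, ∀ z : ℕ+, z ≡ x [MOD p ^ m] → z ∈ C := by
  obtain ⟨b, ⟨hb, -⟩, hbC⟩ := exists_golombBasic_subset hC hx
  refine ⟨b.factorization p + 1, fun w hwx => ?_⟩
  have hpw : ¬ p ∣ (w : ℕ) := not_dvd_of_modEq_pow (Nat.succ_ne_zero _) hwx hpx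
  refine (hcov w hpw).resolve_right fun hwD => ?_
  obtain ⟨c, ⟨hc, -⟩, hcD⟩ := exists_golombBasic_subset hD hwD
  obtain ⟨u, huw, hu⟩ := exists_modEq_forall_mem_closure hp (Nat.mul_pos hb hc) w 1
  have huC : u ∈ closure C := closure_mono hbC
    (hu x b (dvd_mul_right b c) (hwx.of_dvd (pow_dvd_pow p (Nat.le_succ _))))
  have huD : u ∈ closure D := closure_mono hcD (hu w c (dvd_mul_left c b) rfl)
  rcases hcov u (not_dvd_of_modEq_pow one_ne_zero huw hpw) with huC' | huD'
  · exact (hCD.closure_right hC).notMem_of_mem_left huC' huD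
  · exact (hCD.closure_left hD).notMem_of_mem_left huC huD'

lemma isOpen_setOf_not_dvd_and {p k : ℕ} (hp : p.Prime) {P : ℕ → Prop}
    (hP : ∀ x y, x ≡ y [MOD p ^ k] → P x → P y) : IsOpen {z : ℕ+ | ¬ p ∣ (z : ℕ) ∧ P z} :=
  isOpen_of_forall_modEq (pow_pos hp.pos (k + 1))
    (fun _ hx => ((hp.coprime_iff_not_dvd.2 hx.1).pow_left _).symm)
    fun _ hx _ hyx => ⟨not_dvd_of_modEq_pow (Nat.succ_ne_zero k) hyx hx.1,
      hP _ _ (hyx.symm.of_dvd (pow_dvd_pow p (Nat.le_succ k))) hx.2⟩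

lemma InducesOnPrimes.exists_forall_modEq_pow {h : ℕ+ ≃ₜ ℕ+} {σ : Equiv.Perm Nat.Primes}
    (hσ : InducesOnPrimes h σ) {p : Nat.Primes} {x : ℕ+} (hpx : ¬ (p : ℕ) ∣ x) (k : ℕ) :
    ∃ m, ∀ z : ℕ+, z ≡ x [MOD p ^ m] → h z ≡ h x [MOD σ p ^ k] := by
  have hC : IsOpen {y : ℕ+ | ¬ (σ p : ℕ) ∣ y ∧ y ≡ h x [MOD σ p ^ k]} :=
    isOpen_setOf_not_dvd_and (σ p).prop fun _ _ hyz hy => hyz.symm.trans hy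
  have hD : IsOpen {y : ℕ+ | ¬ (σ p : ℕ) ∣ y ∧ ¬ y ≡ h x [MOD σ p ^ k]} :=
    isOpen_setOf_not_dvd_and (P := fun y => ¬ y ≡ h x [MOD σ p ^ k]) (σ p).prop
      fun _ _ hyz hy hz => hy (hyz.trans hz)
  obtain ⟨m, hm⟩ := exists_forall_modEq_pow_mem p.prop (hC.preimage h.continuous)
    (hD.preimage h.continuous) (Set.disjoint_left.2 fun _ hz hz' => hz'.2 hz.2)
    (fun z hz => (em _).imp (And.intro ((hσ p z).not.1 hz)) (And.intro ((hσ p z).not.1 hz)))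
    ⟨(hσ p x).not.1 hpx, rfl⟩ hpx
  exact ⟨m, fun z hz => (hm z hz).2⟩

end PadicContinuity

section Orders

/-- The multiplicative order of `a` modulo `m`, with value `0` when `a` is not a unit. -/
noncomputable def orderMod (a m : ℕ) : ℕ := orderOf (a : ZMod m)

lemma orderMod_dvd_iff {a m n : ℕ} : orderMod a m ∣ n ↔ a ^ n ≡ 1 [MOD m] := by
  rw [orderMod, orderOf_dvd_iff_pow_eq_one, ← ZMod.natCast_eq_natCast_iff, Nat.cast_pow,
    Nat.cast_one]

lemma pow_modEq_pow_iff {a m : ℕ} (ham : a.Coprime m) {i j : ℕ} :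
    a ^ i ≡ a ^ j [MOD m] ↔ i ≡ j [MOD orderMod a m] := by
  have horder : orderOf (ZMod.unitOfCoprime a ham) = orderMod a m := by
    rw [← orderOf_units, ZMod.coe_unitOfCoprime, orderMod]
  rw [← horder, ← pow_eq_pow_iff_modEq, Units.ext_iff, Units.val_pow_eq_pow_val,
    Units.val_pow_eq_pow_val, ZMod.coe_unitOfCoprime, ← ZMod.natCast_eq_natCast_iff,
    Nat.cast_pow, Nat.cast_pow]

lemma orderMod_pow_dvd_mul_pow {a p d : ℕ} (had : a ^ d ≡ 1 [MOD p]) (k : ℕ) :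
    orderMod a (p ^ k) ∣ d * p ^ k := by
  rw [orderMod_dvd_iff, pow_mul, Nat.ModEq.comm, Nat.modEq_iff_dvd]
  have hd : (p : ℤ) ∣ (a : ℤ) ^ d - 1 := by simpa using Nat.modEq_iff_dvd.1 had.symm
  simpa using (pow_dvd_pow (p : ℤ) k.le_succ).trans (dvd_sub_pow_of_dvd_sub hd k)

lemma orderMod_pow_dvd_pred_mul_pow {a p : ℕ} (hp : p.Prime) (hap : a.Coprime p) (k : ℕ) :
    orderMod a (p ^ k) ∣ (p - 1) * p ^ k :=
  orderMod_pow_dvd_mul_pow (Nat.totient_prime hp ▸ Nat.ModEq.pow_totient hap) k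

lemma dvd_mul_of_coprime_of_dvd_mul {g a b u v : ℕ} (huv : u.Coprime v) (hau : g ∣ a * u)
    (hbv : g ∣ b * v) : g ∣ a * b := by
  have hdvd := Nat.dvd_gcd (hau.mul_right b) (hbv.mul_left a)
  rwa [mul_right_comm, ← mul_assoc a b v, Nat.gcd_mul_left, huv.gcd_eq_one, mul_one] at hdvd

/- The orders of `b` modulo `r ^ k` are unbounded. If `r ≠ p`, then dividing an order modulo a power
of `p` forces them to divide `(r - 1) * (p - 1)`. -/
lemma eq_of_orderMod_dvd {a b p r : ℕ} (hb : 2 ≤ b) (hp : p.Prime) (hr : r.Prime)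
    (hap : a.Coprime p) (hbr : b.Coprime r)
    (horder : ∀ k, ∃ m, orderMod b (r ^ k) ∣ orderMod a (p ^ m)) : r = p := by
  by_contra hne
  set N := (r - 1) * (p - 1)
  have hN : N ≠ 0 := mul_ne_zero (Nat.sub_pos_of_lt hr.one_lt).ne' (Nat.sub_pos_of_lt hp.one_lt).ne'
  obtain ⟨m, hm⟩ := horder (b ^ N)
  have hdvd : orderMod b (r ^ b ^ N) ∣ N := dvd_mul_of_coprime_of_dvd_mul
    (((Nat.coprime_primes hr hp).2 hne).pow (b ^ N) m) (orderMod_pow_dvd_pred_mul_pow hr hbr _)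
    (hm.trans (orderMod_pow_dvd_pred_mul_pow hp hap m))
  have hbN : 1 < b ^ N := Nat.one_lt_pow hN hb
  have hlt : b ^ N < r ^ b ^ N := Nat.lt_pow_self hr.one_lt
  exact hbN.ne' ((orderMod_dvd_iff.1 hdvd).eq_of_lt_of_lt hlt (hbN.trans hlt))

end Orders

section LinkedPowers

/-- There are powers of `q` which are simultaneously arbitrarily close to `q ^ a` in the `p₁`-adic
topology and to `q ^ b` in the `p₂`-adic topology. -/
def PowersLinked (q p₁ p₂ a b : ℕ) : Prop :=
  ∀ k, ∃ n, q ^ n ≡ q ^ a [MOD p₁ ^ k] ∧ q ^ n ≡ q ^ b [MOD p₂ ^ k]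

lemma powersLinked_iff {q p₁ p₂ : ℕ} (h₁ : q.Coprime p₁) (h₂ : q.Coprime p₂) {a b : ℕ} :
    PowersLinked q p₁ p₂ a b ↔
      ∀ k, a ≡ b [MOD (orderMod q (p₁ ^ k)).gcd (orderMod q (p₂ ^ k))] := by
  refine forall_congr' fun k => ?_
  simp only [pow_modEq_pow_iff (h₁.pow_right k), pow_modEq_pow_iff (h₂.pow_right k)]
  refine ⟨fun ⟨n, hna, hnb⟩ => ?_, fun hab => ?_⟩
  · exact (hna.of_dvd (Nat.gcd_dvd_left _ _)).symm.trans (hnb.of_dvd (Nat.gcd_dvd_right _ _))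
  · exact ⟨Nat.chineseRemainder' hab, (Nat.chineseRemainder' hab).2⟩

lemma exists_forall_modEq_iff_modEq {ι : Type*} {f : ι → ℕ} {N : ℕ} (hN : 0 < N)
    (hf : ∀ k, f k ∣ N) : ∃ G, 0 < G ∧ ∀ a b, (∀ k, a ≡ b [MOD f k]) ↔ a ≡ b [MOD G] := by
  classical
  set s : Finset ℕ := {d ∈ N.divisors | d ∈ Set.range f}
  have hmem : ∀ k, f k ∈ s := fun k =>
    Finset.mem_filter.2 ⟨Nat.mem_divisors.2 ⟨hf k, hN.ne'⟩, k, rfl⟩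
  have hlcm : ∀ n, s.lcm id ∣ n ↔ ∀ k, f k ∣ n := fun n => by
    refine Finset.lcm_dvd_iff.trans ⟨fun h k => h _ (hmem k), fun h d hd => ?_⟩
    obtain ⟨-, k, rfl⟩ := Finset.mem_filter.1 hd
    exact h k
  refine ⟨s.lcm id, Nat.pos_of_dvd_of_pos ((hlcm N).2 hf) hN, fun a b => ?_⟩
  simp only [Nat.modEq_iff_dvd, Int.natCast_dvd, hlcm]

lemma exists_powersLinked_iff_modEq {q p₁ p₂ : ℕ} (hp₁ : p₁.Prime) (hp₂ : p₂.Prime)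
    (hcop : p₁.Coprime p₂) (h₁ : q.Coprime p₁) (h₂ : q.Coprime p₂) :
    ∃ G, 0 < G ∧ ∀ a b, PowersLinked q p₁ p₂ a b ↔ a ≡ b [MOD G] := by
  simp only [powersLinked_iff h₁ h₂]
  refine exists_forall_modEq_iff_modEq (N := (p₁ - 1) * (p₂ - 1))
    (Nat.mul_pos (Nat.sub_pos_of_lt hp₁.one_lt) (Nat.sub_pos_of_lt hp₂.one_lt)) fun k => ?_
  exact dvd_mul_of_coprime_of_dvd_mul (hcop.pow k k)
    ((Nat.gcd_dvd_left _ _).trans (orderMod_pow_dvd_pred_mul_pow hp₁ h₁ k))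
    ((Nat.gcd_dvd_right _ _).trans (orderMod_pow_dvd_pred_mul_pow hp₂ h₂ k))

end LinkedPowers

section Zsigmondy

lemma orderOf_eq_pow_succ_of_geom_sum_eq_zero {R : Type*} [Ring R] {x : R} {l i : ℕ}
    (hl : l.Prime) (hlR : (l : R) ≠ 0) (hx : ∑ t ∈ Finset.range l, (x ^ l ^ i) ^ t = 0) :
    orderOf x = l ^ (i + 1) := by
  have : Fact l.Prime := ⟨hl⟩
  refine orderOf_eq_prime_pow (fun hone => hlR ?_) ?_
  · simpa [hone] using hx
  · rw [pow_succ, pow_mul, ← sub_eq_zero, ← geom_sum_mul, hx, zero_mul]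

lemma not_sq_dvd_geom_sum_of_odd {l : ℕ} (hl : l.Prime) (hodd : Odd l) (x : ℕ) :
    ¬ l ^ 2 ∣ ∑ t ∈ Finset.range l, x ^ t := by
  have : Fact l.Prime := ⟨hl⟩
  intro hsq
  have hgeom : ∑ t ∈ Finset.range l, (x : ZMod l) ^ t = 0 := by
    exact_mod_cast (ZMod.natCast_eq_zero_iff _ l).2 ((dvd_pow_self l two_ne_zero).trans hsq)
  have hx : x ≡ 1 [MOD l] := by
    rw [← ZMod.natCast_eq_natCast_iff, Nat.cast_one, ← sub_eq_zero, ← ZMod.pow_card (x : ZMod l),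
      ← geom_sum_mul, hgeom, zero_mul]
  obtain ⟨b, hb⟩ := Nat.modEq_iff_dvd.1 hx.symm
  have hsub := odd_sq_dvd_geom_sum₂_sub (R := ℤ) 1 b hodd
  simp only [one_pow, mul_one, ← hb, Nat.cast_one, add_sub_cancel] at hsub
  have hdvd : l ^ 2 ∣ l := by exact_mod_cast (dvd_sub_right (by exact_mod_cast hsq)).1 hsub
  exact hl.prime.not_isUnit (hl.prime.squarefree l (sq l ▸ hdvd))

lemma not_four_dvd_one_add_sq (x : ℕ) : ¬ 4 ∣ 1 + x ^ 2 := by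
  rcases Nat.even_or_odd' x with ⟨r, rfl | rfl⟩ <;> ring_nf <;> lia

lemma exists_prime_ne_dvd {l n : ℕ} (hl : l.Prime) (hn : l < n) (hsq : ¬ l ^ 2 ∣ n) :
    ∃ p, p.Prime ∧ p ≠ l ∧ p ∣ n := by
  by_contra! hno
  have hpow : n = l ^ n.primeFactorsList.length :=
    Nat.eq_prime_pow_of_unique_prime_dvd (by lia) fun {d} hd hdn => by_contra fun hdl =>
      hno d hd hdl hdn
  have hlen : 1 < n.primeFactorsList.length := by
    rwa [← Nat.pow_lt_pow_iff_right hl.one_lt, pow_one, ← hpow]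
  exact hsq (hpow ▸ pow_dvd_pow l hlen)

lemma not_sq_dvd_geom_sum_pow {l i : ℕ} (hl : l.Prime) (hli : l ^ (i + 1) ≠ 2) (q : ℕ) :
    ¬ l ^ 2 ∣ ∑ t ∈ Finset.range l, (q ^ l ^ i) ^ t := by
  rcases hl.eq_two_or_odd' with rfl | hodd
  · obtain ⟨j, rfl⟩ : ∃ j, i = j + 1 := Nat.exists_eq_succ_of_ne_zero fun hi => hli (by simp [hi])
    simpa [Finset.sum_range_succ, pow_succ, pow_mul] using not_four_dvd_one_add_sq (q ^ 2 ^ j)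
  · exact not_sq_dvd_geom_sum_of_odd hl hodd _

/- A weak form of Zsigmondy's theorem; for `l ^ (i + 1) = 2` and `q = 3` there is no such prime. -/
lemma exists_prime_orderMod_eq {q l i : ℕ} (hq : 2 ≤ q) (hl : l.Prime) (hli : l ^ (i + 1) ≠ 2) :
    ∃ p, p.Prime ∧ p ≠ l ∧ q.Coprime p ∧ orderMod q p = l ^ (i + 1) := by
  have hlt : l < ∑ t ∈ Finset.range l, (q ^ l ^ i) ^ t := by
    have hpow : 1 < q ^ l ^ i := Nat.one_lt_pow (pow_pos hl.pos i).ne' hq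
    calc l = ∑ _t ∈ Finset.range l, 1 := by simp
      _ < _ := Finset.sum_lt_sum (fun t _ => Nat.one_le_pow _ _ (one_pos.trans hpow))
          ⟨1, Finset.mem_range.2 hl.one_lt, by rwa [pow_one]⟩
  obtain ⟨p, hp, hpl, hdvd⟩ := exists_prime_ne_dvd hl hlt (not_sq_dvd_geom_sum_pow hl hli q)
  have : Fact p.Prime := ⟨hp⟩
  have hlp : (l : ZMod p) ≠ 0 := fun h =>
    hpl ((Nat.prime_dvd_prime_iff_eq hp hl).1 ((ZMod.natCast_eq_zero_iff _ _).1 h))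
  have horder : orderMod q p = l ^ (i + 1) :=
    orderOf_eq_pow_succ_of_geom_sum_eq_zero hl hlp
      (by exact_mod_cast (ZMod.natCast_eq_zero_iff _ _).2 hdvd)
  refine ⟨p, hp, hpl, ?_, horder⟩
  have hpow : q ^ l ^ (i + 1) ≡ 1 [MOD p] := orderMod_dvd_iff.1 horder.dvd
  exact (Nat.coprime_pow_left_iff (pow_pos hl.pos _) q p).1
    (hpow.gcd_eq.trans (Nat.gcd_one_left p))

lemma powersLinked_iff_modEq_of_orderMod_dvd {q p₁ p₂ : ℕ} (h₁ : q.Coprime p₁)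
    (h₂ : q.Coprime p₂) (hdvd : orderMod q p₁ ∣ orderMod q p₂)
    (hcop : (orderMod q p₂).Coprime p₁) (hp : p₂.Coprime p₁) (a b : ℕ) :
    PowersLinked q p₁ p₂ a b ↔ a ≡ b [MOD orderMod q p₁] := by
  rw [powersLinked_iff h₁ h₂]
  refine ⟨fun hab => ?_, fun hab k => hab.of_dvd ?_⟩
  · simpa only [pow_one, Nat.gcd_eq_left hdvd] using hab 1
  · set g := (orderMod q (p₁ ^ k)).gcd (orderMod q (p₂ ^ k))
    have hg₁ : g ∣ orderMod q p₁ * p₁ ^ k :=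
      (Nat.gcd_dvd_left _ _).trans (orderMod_pow_dvd_mul_pow (orderMod_dvd_iff.1 dvd_rfl) k)
    have hg₂ : g ∣ orderMod q p₂ * p₂ ^ k :=
      (Nat.gcd_dvd_right _ _).trans (orderMod_pow_dvd_mul_pow (orderMod_dvd_iff.1 dvd_rfl) k)
    have hgcop : (orderMod q p₂ * p₂ ^ k).Coprime (p₁ ^ k) :=
      (hcop.pow_right k).mul_left (hp.pow k k)
    exact (hgcop.coprime_dvd_left hg₂).dvd_of_dvd_mul_right hg₁

lemma exists_primes_powersLinked_iff_modEq {q m : ℕ} (hq : 2 ≤ q) (hm : IsPrimePow m)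
    (hm2 : m ≠ 2) : ∃ p₁ p₂ : Nat.Primes, p₁ ≠ p₂ ∧ q.Coprime p₁ ∧ q.Coprime p₂ ∧
      ∀ a b, PowersLinked q p₁ p₂ a b ↔ a ≡ b [MOD m] := by
  obtain ⟨l, k, hl, hk, rfl⟩ := (isPrimePow_nat_iff _).1 hm
  obtain ⟨i, rfl⟩ := Nat.exists_eq_succ_of_ne_zero hk.ne'
  have hlt : l ^ (i + 1) < l ^ (i + 2) := Nat.pow_lt_pow_right hl.one_lt (Nat.lt_succ_self _)
  have hl2 : 2 ≤ l ^ (i + 1) := hl.two_le.trans (Nat.le_self_pow i.succ_ne_zero l)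
  obtain ⟨p₁, hp₁, hl₁, hq₁, ho₁⟩ := exists_prime_orderMod_eq hq hl hm2
  obtain ⟨p₂, hp₂, -, hq₂, ho₂⟩ := exists_prime_orderMod_eq hq hl (hl2.trans_lt hlt).ne'
  have hne : p₁ ≠ p₂ := by
    rintro rfl
    exact hlt.ne (ho₁.symm.trans ho₂)
  refine ⟨⟨p₁, hp₁⟩, ⟨p₂, hp₂⟩, fun h => hne (congrArg Subtype.val h), hq₁, hq₂, ho₁ ▸ ?_⟩
  refine powersLinked_iff_modEq_of_orderMod_dvd hq₁ hq₂ ?_ ?_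
    ((Nat.coprime_primes hp₂ hp₁).2 hne.symm)
  · rw [ho₁, ho₂]
    exact pow_dvd_pow l (Nat.le_succ _)
  · rw [ho₂]
    exact ((Nat.coprime_primes hl hp₁).2 hl₁.symm).pow_left _

end Zsigmondy

section CongruenceRigidity

lemma le_of_modEq_imp_modEq {f : ℕ → ℕ} {G G' : ℕ} (hG' : 0 < G')
    (hf : ∀ a b, f a ≡ f b [MOD G'] → a ≡ b [MOD G]) : G ≤ G' := by
  have hcard := Finset.card_le_card_of_injOn (s := Finset.range G) (t := Finset.range G')
    (fun a => f a % G') (fun a _ => Finset.mem_range.2 (Nat.mod_lt _ hG'))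
    fun a ha b hb hab =>
      (hf a b hab).eq_of_lt_of_lt (Finset.mem_range.1 ha) (Finset.mem_range.1 hb)
  simpa only [Finset.card_range] using hcard

lemma modulus_eq_of_modEq_iff (e : ℕ ≃ ℕ) {G G' : ℕ} (hG : 0 < G) (hG' : 0 < G')
    (he : ∀ a b, a ≡ b [MOD G] ↔ e a ≡ e b [MOD G']) : G = G' := by
  refine le_antisymm (le_of_modEq_imp_modEq hG' fun a b => (he a b).2)
    (le_of_modEq_imp_modEq (f := e.symm) hG fun a b hab => ?_)
  simpa only [e.apply_symm_apply] using (he _ _).1 hab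

lemma eq_of_forall_prime_pow_dvd_iff {a b : ℕ}
    (hab : ∀ p k, p.Prime → (p ^ k ∣ a ↔ p ^ k ∣ b)) : a = b :=
  Nat.dvd_antisymm
    ((Nat.dvd_iff_prime_pow_dvd_dvd _ _).2 fun p k hp => (hab p k hp).1)
    ((Nat.dvd_iff_prime_pow_dvd_dvd _ _).2 fun p k hp => (hab p k hp).2)

/- Divisibility fixes the multiples of `4`, and these approximate every integer `3`-adically. -/
lemma eq_id_of_modEq_iff {f : ℕ → ℕ} (h0 : f 0 = 0)
    (hf : ∀ m, IsPrimePow m → m ≠ 2 → ∀ a b, a ≡ b [MOD m] ↔ f a ≡ f b [MOD m]) : f = id := by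
  have hdvd : ∀ m, IsPrimePow m → m ≠ 2 → ∀ a, m ∣ a ↔ m ∣ f a := fun m hm hm2 a => by
    simpa only [h0, Nat.modEq_zero_iff_dvd] using hf m hm hm2 a 0
  have hfix : ∀ a, 4 ∣ a → f a = a := by
    intro a ha
    have ha' : 4 ∣ f a :=
      (hdvd 4 (Nat.prime_two.isPrimePow.pow two_ne_zero) (by norm_num) a).1 ha
    refine (eq_of_forall_prime_pow_dvd_iff fun p k hp => ?_).symm
    rcases eq_or_ne k 0 with rfl | hk
    · simp only [pow_zero, one_dvd]
    rcases eq_or_ne (p ^ k) 2 with hpk | hpk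
    · rw [hpk]
      lia
    · exact hdvd _ (hp.isPrimePow.pow hk) hpk a
  funext n
  set M := 3 ^ (n + f n + 1)
  have hlt : n + f n + 1 < M := Nat.lt_pow_self (by norm_num)
  have hM : IsPrimePow M := Nat.prime_three.isPrimePow.pow (Nat.succ_ne_zero _)
  have hM2 : M ≠ 2 := (Odd.pow (by decide : Odd 3)).ne_two_of_dvd_nat dvd_rfl
  obtain ⟨a, ha4, han⟩ := Nat.chineseRemainder
    (Nat.Coprime.pow_right (n + f n + 1) (by norm_num : Nat.Coprime 4 3)) 0 n
  have hfa : f a ≡ f n [MOD M] := (hf M hM hM2 a n).1 han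
  rw [hfix a (Nat.modEq_zero_iff_dvd.1 ha4)] at hfa
  exact (hfa.symm.trans han).eq_of_lt_of_lt (by lia) (by lia)

end CongruenceRigidity

section Rigidity

variable {h : ℕ+ ≃ₜ ℕ+} {σ : Equiv.Perm Nat.Primes}

lemma coprime_primes_iff {p q : Nat.Primes} : (p : ℕ).Coprime q ↔ p ≠ q :=
  (Nat.coprime_primes p.prop q.prop).trans Subtype.coe_injective.ne_iff

lemma coe_prime_pow (q : Nat.Primes) (n : ℕ) : (((q : ℕ+) ^ n : ℕ+) : ℕ) = (q : ℕ) ^ n :=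
  PNat.pow_coe q n

lemma prime_pow_injective (q : Nat.Primes) : Function.Injective fun n => (q : ℕ+) ^ n :=
  fun a b hab => Nat.pow_right_injective q.prop.two_le (by
    simpa only [coe_prime_pow] using congrArg PNat.val hab)

lemma InducesOnPrimes.exists_map_pow_eq (hσ : InducesOnPrimes h σ) (q : Nat.Primes) (n : ℕ) :
    ∃ m, h (q ^ n) = (σ q : ℕ+) ^ m := by
  refine ⟨(h (q ^ n) : ℕ).primeFactorsList.length, PNat.eq ?_⟩
  rw [coe_prime_pow]
  refine Nat.eq_prime_pow_of_unique_prime_dvd (h (q ^ n)).ne_zero fun {r} hr hrn => ?_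
  obtain ⟨p, hp⟩ := σ.surjective ⟨r, hr⟩
  obtain rfl : (σ p : ℕ) = r := congrArg Subtype.val hp
  have hpq : (p : ℕ) ∣ (q : ℕ) ^ n := coe_prime_pow q n ▸ (hσ p _).2 hrn
  have hpq' : p = q :=
    Subtype.ext ((Nat.prime_dvd_prime_iff_eq p.prop q.prop).1 (p.prop.dvd_of_dvd_pow hpq))
  rw [hpq']

lemma InducesOnPrimes.exists_exponent_equiv (hσ : InducesOnPrimes h σ) (q : Nat.Primes) :
    ∃ e : ℕ ≃ ℕ, ∀ n, h (q ^ n) = (σ q : ℕ+) ^ e n := by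
  choose e he using hσ.exists_map_pow_eq q
  choose e' he' using hσ.symm.exists_map_pow_eq (σ q)
  simp only [σ.symm_apply_apply] at he'
  refine ⟨⟨e, e', fun n => prime_pow_injective q ?_, fun n => prime_pow_injective (σ q) ?_⟩, he⟩
  · simp only [← he', ← he, h.symm_apply_apply]
  · simp only [← he', ← he, h.apply_symm_apply]

lemma InducesOnPrimes.exists_pow_modEq_imp (hσ : InducesOnPrimes h σ) {p q : Nat.Primes}
    (hpq : p ≠ q) {e : ℕ → ℕ} (he : ∀ n, h (q ^ n) = (σ q : ℕ+) ^ e n) (a k : ℕ) :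
    ∃ m, ∀ n, (q : ℕ) ^ n ≡ q ^ a [MOD p ^ m] → (σ q : ℕ) ^ e n ≡ σ q ^ e a [MOD σ p ^ k] := by
  have hpa : ¬ (p : ℕ) ∣ ((q ^ a : ℕ+) : ℕ) := by
    rw [coe_prime_pow]
    exact p.prop.coprime_iff_not_dvd.1 ((coprime_primes_iff.2 hpq).pow_right a)
  obtain ⟨m, hm⟩ := hσ.exists_forall_modEq_pow hpa k
  refine ⟨m, fun n hn => ?_⟩
  simpa only [he, coe_prime_pow] using hm (q ^ n) (by simpa only [coe_prime_pow] using hn)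

lemma InducesOnPrimes.powersLinked_map (hσ : InducesOnPrimes h σ) {q p₁ p₂ : Nat.Primes}
    (h₁ : p₁ ≠ q) (h₂ : p₂ ≠ q) {e : ℕ → ℕ} (he : ∀ n, h (q ^ n) = (σ q : ℕ+) ^ e n) {a b : ℕ}
    (hab : PowersLinked q p₁ p₂ a b) : PowersLinked (σ q) (σ p₁) (σ p₂) (e a) (e b) := by
  intro k
  obtain ⟨m₁, hm₁⟩ := hσ.exists_pow_modEq_imp h₁ he a k
  obtain ⟨m₂, hm₂⟩ := hσ.exists_pow_modEq_imp h₂ he b k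
  obtain ⟨n, hna, hnb⟩ := hab (max m₁ m₂)
  exact ⟨e n, hm₁ n (hna.of_dvd (pow_dvd_pow _ (le_max_left m₁ m₂))),
    hm₂ n (hnb.of_dvd (pow_dvd_pow _ (le_max_right m₁ m₂)))⟩

lemma InducesOnPrimes.powersLinked_map_iff (hσ : InducesOnPrimes h σ) {q p₁ p₂ : Nat.Primes}
    (h₁ : p₁ ≠ q) (h₂ : p₂ ≠ q) {e : ℕ ≃ ℕ} (he : ∀ n, h (q ^ n) = (σ q : ℕ+) ^ e n) {a b : ℕ} :
    PowersLinked q p₁ p₂ a b ↔ PowersLinked (σ q) (σ p₁) (σ p₂) (e a) (e b) := by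
  refine ⟨hσ.powersLinked_map h₁ h₂ he, fun hab => ?_⟩
  have he' : ∀ n, h.symm (σ q ^ n) = (σ.symm (σ q) : ℕ+) ^ e.symm n := fun n => by
    rw [h.symm_apply_eq, σ.symm_apply_apply, he, e.apply_symm_apply]
  simpa only [Equiv.symm_apply_apply] using
    hσ.symm.powersLinked_map (σ.injective.ne h₁) (σ.injective.ne h₂) he' hab

lemma InducesOnPrimes.exponent_modEq_iff (hσ : InducesOnPrimes h σ) {q : Nat.Primes} {e : ℕ ≃ ℕ}
    (he : ∀ n, h (q ^ n) = (σ q : ℕ+) ^ e n) {m : ℕ} (hm : IsPrimePow m) (hm2 : m ≠ 2) (a b : ℕ) :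
    a ≡ b [MOD m] ↔ e a ≡ e b [MOD m] := by
  obtain ⟨p₁, p₂, hne, hq₁, hq₂, hlink⟩ :=
    exists_primes_powersLinked_iff_modEq q.prop.two_le hm hm2
  rw [coprime_primes_iff] at hq₁ hq₂
  have cop : ∀ {p r : Nat.Primes}, p ≠ r → (σ p : ℕ).Coprime (σ r) := fun hpr =>
    coprime_primes_iff.2 (σ.injective.ne hpr)
  obtain ⟨G, hG, hlink'⟩ := exists_powersLinked_iff_modEq (σ p₁).prop (σ p₂).prop
    (cop hne) (cop hq₁) (cop hq₂)
  have hmod : ∀ a b, a ≡ b [MOD m] ↔ e a ≡ e b [MOD G] := fun a b => by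
    rw [← hlink, ← hlink', hσ.powersLinked_map_iff hq₁.symm hq₂.symm he]
  obtain rfl := modulus_eq_of_modEq_iff e hm.pos hG hmod
  exact hmod a b

lemma InducesOnPrimes.map_pow (hσ : InducesOnPrimes h σ) (q : Nat.Primes) (n : ℕ) :
    h (q ^ n) = (σ q : ℕ+) ^ n := by
  obtain ⟨e, he⟩ := hσ.exists_exponent_equiv q
  have he0 : e 0 = 0 :=
    prime_pow_injective (σ q) (by simp only [← he, pow_zero, homeomorph_map_one])
  rw [he, eq_id_of_modEq_iff he0 fun m hm hm2 => hσ.exponent_modEq_iff he hm hm2, id]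

lemma InducesOnPrimes.apply_eq (hσ : InducesOnPrimes h σ) (p : Nat.Primes) : σ p = p := by
  obtain ⟨q, hqp⟩ := exists_ne p
  refine Subtype.ext (eq_of_orderMod_dvd (σ q).prop.two_le p.prop (σ p).prop
    (coprime_primes_iff.2 hqp) (coprime_primes_iff.2 (σ.injective.ne hqp)) fun k => ?_)
  obtain ⟨m, hm⟩ := hσ.exists_pow_modEq_imp hqp.symm (e := id) (hσ.map_pow q) 0 k
  refine ⟨m, orderMod_dvd_iff.2 ?_⟩
  simpa using hm _ (orderMod_dvd_iff.1 dvd_rfl)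

lemma homeomorph_map_prime (h : ℕ+ ≃ₜ ℕ+) (p : Nat.Primes) : h p = p := by
  obtain ⟨σ, hσ⟩ := exists_inducesOnPrimes h
  simpa only [pow_one, hσ.apply_eq] using hσ.map_pow p 1

theorem golomb_homeomorph_eq_refl (h : ℕ+ ≃ₜ ℕ+) : h = Homeomorph.refl ℕ+ :=
  Homeomorph.ext <| congrFun <| h.continuous.ext_on dense_setOf_prime continuous_id
    fun p hp => homeomorph_map_prime h ⟨p, hp⟩

end Rigidity

/-- Every homeomorphism of the Golomb space fixes `1`, permutes the primes,
satisfies `Π_{h(x)} = h(Π_x)` and `h(x^ℕ) = h(x)^ℕ`. -/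
theorem golomb_homeo_properties (h : ℕ+ ≃ₜ ℕ+) :
    h 1 = 1 ∧
    h '' {p : ℕ+ | (p : ℕ).Prime} = {p : ℕ+ | (p : ℕ).Prime} ∧
    (∀ x : ℕ+, {q : ℕ+ | (q : ℕ).Prime ∧ (q : ℕ) ∣ (↑(h x) : ℕ)} =
      h '' {q : ℕ+ | (q : ℕ).Prime ∧ (q : ℕ) ∣ (x : ℕ)}) ∧
    (∀ x : ℕ+, h '' {y : ℕ+ | ∃ k : ℕ, 0 < k ∧ y = x ^ k} =
      {y : ℕ+ | ∃ k : ℕ, 0 < k ∧ y = h x ^ k}) := by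
  obtain rfl := golomb_homeomorph_eq_refl h
  simp
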